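/- For every integer s ≥ 5, let θ_s be the linear functional on (P_4)_{3·2^s−2} whose value is 1 on the single monomial x_1x_2^{2^{s−1}−1}x_3^{2^{s−1}−1}x_4^{2^{s+1}−1} and 0 on every other monomial of degree 3·2^s − 2. Then θ_s vanishes on every hit polynomial of degree 3·2^s − 2; equivalently, θ_s(Sq^t(g)) = 0 for every t > 0 and every g in (P_4)_{3·2^s−2−t}. -/

import Mathlib

open MvPolynomial

noncomputable section

abbrev kk : Type := ZMod 2
abbrev P4 : Type := MvPolynomial (Fin 4) kk

/-- The total Steenrod square: the algebra endomorphism of `P4` with `X i ↦ X i + (X i)^2`.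
For `g` homogeneous of degree `d`, `Sq^t g` is the degree-`d+t` homogeneous component
of `sqTotal g`. -/
def sqTotal : P4 →ₐ[kk] P4 := aeval fun i => X i + X i ^ 2

/-- The homogeneous polynomials of degree `n`, i.e. `(P_4)_n`, as a submodule. -/
def homog (n : ℕ) : Submodule kk P4 := homogeneousSubmodule (Fin 4) kk n

/-- The subspace `H_n` of hit polynomials of degree `n`: it is spanned by the elements
`Sq^{n-d}(g) = (sqTotal g)_n` for `g` homogeneous of degree `d < n`, i.e. by all
`∑_{t>0} Sq^t(f_t)` with `f_t ∈ (P_4)_{n-t}`. -/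
def hitSub (n : ℕ) : Submodule kk P4 :=
  Submodule.span kk
    {p | ∃ d, d < n ∧ ∃ g ∈ homog d, p = homogeneousComponent n (sqTotal g)}

/-- The exponent vector `(a, b, c, d)` of the monomial `x₁^a x₂^b x₃^c x₄^d`. -/
def ev (a b c d : ℕ) : Fin 4 →₀ ℕ := Finsupp.equivFunOnFinite.symm ![a, b, c, d]

theorem spike_choose (m : ℕ) : ∀ a j : ℕ, a + j = 2 ^ m - 1 → (a.choose j) % 2 = 1 → j = 0 := by
  induction m with
  | zero => intro a j h _; simp at h; omega
  | succ m ih =>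
    intro a j h hc
    have : Fact (Nat.Prime 2) := ⟨Nat.prime_two⟩
    have hL := Choose.choose_modEq_choose_mod_mul_choose_div_nat (n := a) (k := j) (p := 2)
    unfold Nat.ModEq at hL
    rw [hc] at hL
    have hp : 0 < 2 ^ m := by positivity
    rw [pow_succ] at h
    generalize 2 ^ m = q at *
    rcases Nat.mod_two_eq_zero_or_one a with ha | ha <;>
    rcases Nat.mod_two_eq_zero_or_one j with hj | hj
    · omega
    · rw [ha, hj] at hL; simp at hL
    · rw [ha, hj] at hL
      have := ih (a / 2) (j / 2) (by omega) (by simpa using hL.symm)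
      omega
    · omega

theorem coeff_sq_monomial (v e : Fin 4 →₀ ℕ) (hv : ∀ i, ∃ m, v i = 2 ^ m - 1) (c : kk)
    (hne : e ≠ v) : coeff v (sqTotal (monomial e c)) = 0 := by
  have h1 : sqTotal (monomial e c) = C c * ∏ i, ∑ j ∈ Finset.range (e i + 1),
      (monomial (Finsupp.single i (e i + j)) ((e i).choose j : kk) : P4) := by
    unfold sqTotal
    rw [aeval_monomial, Finsupp.prod_fintype _ _ (by simp), algebraMap_eq]
    refine congrArg (fun z => C c * z) (Finset.prod_congr rfl fun i _ => ?_)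
    have : (X i + X i ^ 2 : P4) = X i * (X i + 1) := by ring
    rw [this, mul_pow, add_pow, Finset.mul_sum]
    refine Finset.sum_congr rfl fun j _ => ?_
    rw [one_pow, mul_one, ← mul_assoc, ← pow_add, X_pow_eq_monomial, ← map_natCast C,
      mul_comm, C_mul_monomial, mul_one]
  rw [h1, coeff_C_mul, Finset.prod_univ_sum, coeff_sum, Finset.sum_eq_zero, mul_zero]
  intro j _
  have hm : (∏ i, monomial (Finsupp.single i (e i + j i)) ((e i).choose (j i) : kk) : P4) =
      monomial (∑ i, Finsupp.single i (e i + j i)) (∏ i, ((e i).choose (j i) : kk)) := by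
    simp only [Fin.prod_univ_four, Fin.sum_univ_four, monomial_mul]
  rw [hm, coeff_monomial]
  split_ifs with h
  · by_contra hz
    apply hne
    ext i
    have hi : e i + j i = v i := by
      rw [← h]
      simp [Finsupp.finsetSum_apply, Finsupp.single_apply, Finset.sum_add_distrib]
    obtain ⟨m, hm⟩ := hv i
    have hci : (((e i).choose (j i) : ℕ) : kk) ≠ 0 := fun h0 =>
      hz (Finset.prod_eq_zero (Finset.mem_univ i) h0)
    have : (e i).choose (j i) % 2 = 1 := by
      rw [Ne, ZMod.natCast_eq_zero_iff] at hci
      omega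
    have := spike_choose m _ _ (hi.trans hm) this
    omega
  · rfl

/-- For `s ≥ 5`, the linear functional on `(P_4)_{3·2^s-2}` taking the value `1` exactly on
the monomial `x₁ x₂^{2^{s-1}-1} x₃^{2^{s-1}-1} x₄^{2^{s+1}-1}` vanishes on every hit
polynomial of degree `3·2^s - 2`. -/
theorem statement_18 (s : ℕ) (hs : 5 ≤ s) :
    ∀ f ∈ hitSub (3 * 2 ^ s - 2),
      coeff (ev 1 (2 ^ (s - 1) - 1) (2 ^ (s - 1) - 1) (2 ^ (s + 1) - 1)) f = 0 := by
  intro f hf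
  set v := ev 1 (2 ^ (s - 1) - 1) (2 ^ (s - 1) - 1) (2 ^ (s + 1) - 1) with hvdef
  have hv : ∀ i, ∃ m, v i = 2 ^ m - 1 := by
    intro i
    fin_cases i
    · exact ⟨1, rfl⟩
    · exact ⟨s - 1, rfl⟩
    · exact ⟨s - 1, rfl⟩
    · exact ⟨s + 1, rfl⟩
  unfold hitSub at hf
  induction hf using Submodule.span_induction with
  | zero => simp
  | add x y _ _ hx hy => rw [coeff_add, hx, hy, add_zero]
  | smul a x _ hx => rw [coeff_smul, hx, smul_zero]
  | mem p hp =>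
    obtain ⟨d, hd, g, hg, rfl⟩ := hp
    rw [coeff_homogeneousComponent]
    split_ifs with hdeg
    · rw [g.as_sum, map_sum, coeff_sum]
      refine Finset.sum_eq_zero fun e he => coeff_sq_monomial v e hv _ ?_
      rintro rfl
      have h2 : coeff v g = 0 := IsHomogeneous.coeff_eq_zero ((mem_homogeneousSubmodule d g).1 hg) (by rw [hdeg]; omega)
      exact (mem_support_iff.1 he) h2
    · rfl

end
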